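/- For every N ≥ 1, every z ∈ ℂ with Im z ≠ 0, and all indices i, j, k, l ∈ {1,…,N}, one has E(G_{ki} G_{jl}) = N · E(G_{kl} · (V'_t(M))_{ji}). -/

import Mathlib

open MeasureTheory Filter Finset

noncomputable section

namespace LoopEq

/-- The external field `V_t(x) = x^2/2 + ∑_{j=1}^v t_j x^j`. -/
def Vt (v : ℕ) (t : ℕ → ℝ) (x : ℝ) : ℝ :=
  x ^ 2 / 2 + ∑ j ∈ Finset.Icc 1 v, t j * x ^ j

/-- The derivative `V_t'(x) = x + ∑_{j=1}^v j t_j x^(j-1)`. -/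
def Vt' (v : ℕ) (t : ℕ → ℝ) (x : ℝ) : ℝ :=
  x + ∑ j ∈ Finset.Icc 1 v, (j : ℝ) * t j * x ^ (j - 1)

/-- The complex extension of `V_t'`. -/
def Vt'C (v : ℕ) (t : ℕ → ℝ) (z : ℂ) : ℂ :=
  z + ∑ j ∈ Finset.Icc 1 v, (j : ℂ) * (t j : ℂ) * z ^ (j - 1)

/-- The parameter domain `𝕋(T,γ)`. -/
def Tdom (v : ℕ) (T γ : ℝ) : Set (ℕ → ℝ) :=
  {t | Real.sqrt (∑ j ∈ Finset.Icc 1 v, t j ^ 2) ≤ T ∧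
    γ * ∑ j ∈ Finset.Icc 1 (v - 1), |t j| < t v}

/-- The (unnormalized) joint eigenvalue density
`∏_{j<ℓ} (λ_j - λ_ℓ)^2 exp(-N ∑_j V_t(λ_j))`. -/
def dens (v N : ℕ) (t : ℕ → ℝ) (x : Fin N → ℝ) : ℝ :=
  (∏ p ∈ Finset.univ.filter (fun p : Fin N × Fin N => p.1 < p.2), (x p.1 - x p.2) ^ 2) *
    Real.exp (-(N : ℝ) * ∑ i, Vt v t (x i))

/-- The eigenvalue partition function `Z_N(t)`. -/
def Z (v N : ℕ) (t : ℕ → ℝ) : ℝ :=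
  ∫ x : Fin N → ℝ, dens v N t x

/-- Expectation of an eigenvalue statistic with respect to `P_{N,t}`. -/
def Ee (v N : ℕ) (t : ℕ → ℝ) (f : (Fin N → ℝ) → ℝ) : ℝ :=
  (∫ x : Fin N → ℝ, f x * dens v N t x) / Z v N t

/-- The weighted logarithmic energy `∫ V_t dμ - ∫∫ log |λ-η| dμ dμ`. -/
def energy (v : ℕ) (t : ℕ → ℝ) (μ : Measure ℝ) : ℝ :=
  (∫ x, Vt v t x ∂μ) - ∫ x, (∫ y, Real.log |x - y| ∂μ) ∂μ

/-- `μ` is the equilibrium measure: a Borel probability measure minimizing the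
weighted logarithmic energy. -/
def IsEqMeasure (v : ℕ) (t : ℕ → ℝ) (μ : Measure ℝ) : Prop :=
  IsProbabilityMeasure μ ∧
    ∀ ν : Measure ℝ, IsProbabilityMeasure ν → energy v t μ ≤ energy v t ν

/-- The equilibrium density `(1/2π) χ_(α,β)(x) √((x-α)(β-x)) h(x)`. -/
def eqDensity (α β : ℝ) (h : Polynomial ℝ) (x : ℝ) : ℝ :=
  Set.indicator (Set.Ioo α β)
    (fun y => (2 * Real.pi)⁻¹ * Real.sqrt ((y - α) * (β - y)) * h.eval y) x

/-- The support of a measure on ℝ: points all of whose neighborhoods have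
positive measure. -/
def msupport (μ : Measure ℝ) : Set ℝ :=
  {x | ∀ U ∈ nhds x, 0 < μ U}

/-- `ρ` is the one-point function: the density of the expected empirical
measure of eigenvalues. -/
def IsOnePoint (v N : ℕ) (t : ℕ → ℝ) (ρ : ℝ → ℝ) : Prop :=
  ∀ A : Set ℝ, MeasurableSet A →
    ∫ x in A, ρ x = Ee v N t (fun x => (∑ j, Set.indicator A 1 (x j)) / N)

/-- Embedding of `v` real parameters `(t_1, …, t_v)` as a parameter function. -/
def pad (v : ℕ) (s : Fin v → ℝ) : ℕ → ℝ := fun j =>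
  if h : 1 ≤ j ∧ j - 1 < v then s ⟨j - 1, h.2⟩ else 0

/-! Hermitian matrix model -/

/-- Real coordinates for an `N × N` Hermitian matrix: the diagonal entries and
the real and imaginary parts of the above-diagonal entries. -/
abbrev coords (N : ℕ) :=
  (Fin N → ℝ) × ({p : Fin N × Fin N // p.1 < p.2} → ℝ × ℝ)

/-- The Hermitian matrix with the given real coordinates. -/
def herm (N : ℕ) (e : coords N) : Matrix (Fin N) (Fin N) ℂ := fun i j =>
  if hij : i < j then ⟨(e.2 ⟨(i, j), hij⟩).1, (e.2 ⟨(i, j), hij⟩).2⟩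
  else if hji : j < i then ⟨(e.2 ⟨(j, i), hji⟩).1, -(e.2 ⟨(j, i), hji⟩).2⟩
  else ((e.1 i : ℝ) : ℂ)

/-- The matrix external field `V_t(M) = M^2/2 + ∑_{j=1}^v t_j M^j`. -/
def VtM (v N : ℕ) (t : ℕ → ℝ) (M : Matrix (Fin N) (Fin N) ℂ) :
    Matrix (Fin N) (Fin N) ℂ :=
  (2⁻¹ : ℂ) • M ^ 2 + ∑ j ∈ Finset.Icc 1 v, ((t j : ℂ)) • M ^ j

/-- `V_t'(M) = M + ∑_{j=1}^v j t_j M^(j-1)`. -/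
def Vt'M (v N : ℕ) (t : ℕ → ℝ) (M : Matrix (Fin N) (Fin N) ℂ) :
    Matrix (Fin N) (Fin N) ℂ :=
  M + ∑ j ∈ Finset.Icc 1 v, ((j : ℂ) * (t j : ℂ)) • M ^ (j - 1)

/-- The unnormalized density `exp(-N Tr V_t(M))` of the unitary ensemble
measure in the real coordinates of the Hermitian matrix `M`. -/
def wt (v N : ℕ) (t : ℕ → ℝ) (e : coords N) : ℝ :=
  Real.exp (-(N : ℝ) * (Matrix.trace (VtM v N t (herm N e))).re)

/-- The matrix-model partition function `Z̃_N`. -/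
def Zmat (v N : ℕ) (t : ℕ → ℝ) : ℝ :=
  ∫ e : coords N, wt v N t e

/-- Expectation `E` of a matrix statistic with respect to the unitary ensemble
measure `μ_t`. -/
def Em (v N : ℕ) (t : ℕ → ℝ) (f : coords N → ℂ) : ℂ :=
  (∫ e : coords N, f e * (wt v N t e : ℂ)) / (Zmat v N t : ℂ)

/-- The Green's function (resolvent) `G(z, M) = (z - M)⁻¹`. -/
def G (N : ℕ) (z : ℂ) (M : Matrix (Fin N) (Fin N) ℂ) : Matrix (Fin N) (Fin N) ℂ :=
  (z • (1 : Matrix (Fin N) (Fin N) ℂ) - M)⁻¹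



open scoped Matrix.Norms.Operator

lemma herm_isHermitian (N : ℕ) (e : coords N) : (herm N e).IsHermitian := by
  ext i j
  rw [Matrix.conjTranspose_apply]
  rcases lt_trichotomy i j with h | h | h
  · simp only [herm, h, h.asymm, dif_pos, dif_neg, not_false_eq_true]
    apply Complex.ext <;> simp
  · subst h
    simp [herm]
  · simp only [herm, h, h.asymm, dif_pos, dif_neg, not_false_eq_true]
    apply Complex.ext <;> simp

/-- `herm` as a real linear map. -/
def hermL (N : ℕ) : coords N →ₗ[ℝ] Matrix (Fin N) (Fin N) ℂ where
  toFun := herm N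
  map_add' := by
    intro a b
    ext i j
    rw [Matrix.add_apply]
    rcases lt_trichotomy i j with h | h | h
    · simp only [herm, h, h.asymm, dif_pos, dif_neg, not_false_eq_true]
      apply Complex.ext <;> simp
    · subst h
      simp [herm]
    · simp only [herm, h, h.asymm, dif_pos, dif_neg, not_false_eq_true]
      apply Complex.ext <;> simp <;> ring
  map_smul' := by
    intro a b
    ext i j
    rw [Matrix.smul_apply]
    rcases lt_trichotomy i j with h | h | h
    · simp only [herm, h, h.asymm, dif_pos, dif_neg, not_false_eq_true]
      apply Complex.ext <;> simp
    · subst h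
      simp [herm]
    · simp only [herm, h, h.asymm, dif_pos, dif_neg, not_false_eq_true]
      apply Complex.ext <;> simp

lemma herm_continuous (N : ℕ) : Continuous (herm N) :=
  (hermL N).continuous_of_finiteDimensional

lemma herm_surj (N : ℕ) (H : Matrix (Fin N) (Fin N) ℂ) (hH : H.IsHermitian) :
    ∃ d : coords N, herm N d = H := by
  refine ⟨(fun i => (H i i).re, fun p => ((H p.1.1 p.1.2).re, (H p.1.1 p.1.2).im)), ?_⟩
  ext i j
  have hij : star (H j i) = H i j := hH.apply i j
  rcases lt_trichotomy i j with h | h | h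
  · simp only [herm, h, h.asymm, dif_pos, dif_neg, not_false_eq_true]
  · subst h
    simp only [herm, lt_irrefl, dif_neg, not_false_eq_true]
    have h2 := congrArg Complex.im hij
    simp at h2
    apply Complex.ext <;> simp
    linarith
  · simp only [herm, h, h.asymm, dif_pos, dif_neg, not_false_eq_true]
    rw [← hij]
    apply Complex.ext <;> simp

lemma lin_bound {E F : Type*} [NormedAddCommGroup E] [NormedSpace ℝ E] [FiniteDimensional ℝ E]
    [NormedAddCommGroup F] [NormedSpace ℝ F] (f : E →ₗ[ℝ] F) :
    ∃ C : ℝ, 0 ≤ C ∧ ∀ e, ‖f e‖ ≤ C * ‖e‖ :=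
  ⟨‖f.toContinuousLinearMap‖, norm_nonneg _, fun e => f.toContinuousLinearMap.le_opNorm e⟩

lemma herm_norm_le (N : ℕ) : ∃ C : ℝ, 0 ≤ C ∧ ∀ e : coords N, ‖herm N e‖ ≤ C * ‖e‖ :=
  lin_bound (hermL N)

lemma entry_le (N : ℕ) (A : Matrix (Fin N) (Fin N) ℂ) (i j : Fin N) : ‖A i j‖ ≤ ‖A‖ := by
  rw [Matrix.linfty_opNorm_def]
  have h1 : ‖A i j‖₊ ≤ ∑ j, ‖A i j‖₊ :=
    Finset.single_le_sum (f := fun j => ‖A i j‖₊) (fun _ _ => zero_le) (Finset.mem_univ j)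
  have h2 : ∑ j, ‖A i j‖₊ ≤ Finset.univ.sup fun i => ∑ j, ‖A i j‖₊ :=
    Finset.le_sup (f := fun i => ∑ j, ‖A i j‖₊) (Finset.mem_univ i)
  exact_mod_cast h1.trans h2

lemma spectral (N : ℕ) (M : Matrix (Fin N) (Fin N) ℂ) (hM : M.IsHermitian) :
    ∃ (U W : Matrix (Fin N) (Fin N) ℂ) (x : Fin N → ℝ), U * W = 1 ∧ W * U = 1 ∧
      M = U * Matrix.diagonal (fun a => (x a : ℂ)) * W ∧
      (∀ a b, ‖U a b‖ ≤ 1) ∧ (∀ a b, ‖W a b‖ ≤ 1) := by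
  refine ⟨hM.eigenvectorUnitary, star (hM.eigenvectorUnitary : Matrix (Fin N) (Fin N) ℂ),
    hM.eigenvalues, ?_, ?_, ?_, ?_, ?_⟩
  · exact (Matrix.mem_unitaryGroup_iff).1 hM.eigenvectorUnitary.2
  · exact (Matrix.mem_unitaryGroup_iff').1 hM.eigenvectorUnitary.2
  · exact hM.spectral_theorem
  · exact fun a b => entry_norm_bound_of_unitary hM.eigenvectorUnitary.2 a b
  · intro a b
    rw [Matrix.star_apply, norm_star]
    exact entry_norm_bound_of_unitary hM.eigenvectorUnitary.2 b a

lemma G_facts (N : ℕ) (z : ℂ) (hz : z.im ≠ 0) (M : Matrix (Fin N) (Fin N) ℂ)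
    (hM : M.IsHermitian) :
    IsUnit (z • (1 : Matrix (Fin N) (Fin N) ℂ) - M) ∧
      ∀ a b, ‖G N z M a b‖ ≤ N * |z.im|⁻¹ := by
  obtain ⟨U, W, x, h1, h2, h3, hU, hW⟩ := spectral N M hM
  have hne : ∀ a, z - (x a : ℂ) ≠ 0 := by
    intro a h
    apply hz
    simpa using congrArg Complex.im h
  have e1 : z • (1 : Matrix (Fin N) (Fin N) ℂ) - M =
      U * Matrix.diagonal (fun a => z - (x a : ℂ)) * W := by
    have : Matrix.diagonal (fun a => z - (x a : ℂ)) =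
        z • (1 : Matrix (Fin N) (Fin N) ℂ) - Matrix.diagonal (fun a => (x a : ℂ)) := by
      rw [← Matrix.diagonal_one, ← Matrix.diagonal_smul, Matrix.diagonal_sub]
      simp
    rw [this, mul_sub, sub_mul, ← h3]
    simp [h1]
  have e2 : (z • (1 : Matrix (Fin N) (Fin N) ℂ) - M) *
      (U * Matrix.diagonal (fun a => (z - (x a : ℂ))⁻¹) * W) = 1 := by
    rw [e1]
    calc _ = U * (Matrix.diagonal (fun a => z - (x a : ℂ)) * ((W * U) *
          Matrix.diagonal (fun a => (z - (x a : ℂ))⁻¹))) * W := by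
          simp only [mul_assoc]
      _ = 1 := by
          rw [h2, one_mul, Matrix.diagonal_mul_diagonal]
          have : (fun a => (z - (x a : ℂ)) * (z - (x a : ℂ))⁻¹) = fun _ => 1 := by
            funext a
            exact mul_inv_cancel₀ (hne a)
          rw [this, Matrix.diagonal_one, mul_one, h1]
  refine ⟨.of_mul_eq_one _ e2, ?_⟩
  intro a b
  rw [G, Matrix.inv_eq_right_inv e2, Matrix.mul_apply]
  calc _ ≤ ∑ c : Fin N, |z.im|⁻¹ := by
        refine norm_sum_le_of_le _ fun c _ => ?_
        rw [Matrix.mul_diagonal, norm_mul, norm_mul, norm_inv]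
        have h5 : ‖z - (x c : ℂ)‖⁻¹ ≤ |z.im|⁻¹ := by
          apply inv_anti₀ (abs_pos.2 hz)
          simpa using Complex.abs_im_le_norm (z - (x c : ℂ))
        have h6 : (0 : ℝ) ≤ ‖z - (x c : ℂ)‖⁻¹ := by positivity
        calc _ ≤ 1 * |z.im|⁻¹ * 1 := by
              gcongr
              · exact hU a c
              · exact hW c b
          _ = _ := by ring
    _ = _ := by simp

lemma G_continuous (N : ℕ) (z : ℂ) (hz : z.im ≠ 0) :
    Continuous fun e => G N z (herm N e) := by
  rw [continuous_iff_continuousAt]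
  intro e
  obtain ⟨u, hu⟩ := (G_facts N z hz _ (herm_isHermitian N e)).1
  have h := NormedRing.inverse_continuousAt u
  rw [hu] at h
  have h2 : ContinuousAt (fun e => z • (1 : Matrix (Fin N) (Fin N) ℂ) - herm N e) e :=
    (continuous_const.sub (herm_continuous N)).continuousAt
  have h3 := ContinuousAt.comp (f := fun e => z • (1 : Matrix (Fin N) (Fin N) ℂ) - herm N e) h h2
  simp only [G, Matrix.nonsing_inv_eq_ringInverse]
  exact h3

lemma G_deriv (N : ℕ) (z : ℂ) (hz : z.im ≠ 0) (e d : coords N) (k l : Fin N) :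
    HasLineDerivAt ℝ (fun e => G N z (herm N e) k l)
      ((G N z (herm N e) * herm N d * G N z (herm N e)) k l) e d := by
  obtain ⟨u, hu⟩ := (G_facts N z hz _ (herm_isHermitian N e)).1
  have h := hasFDerivAt_ringInverse (𝕜 := ℝ) u
  have hl : ∀ s : ℝ, herm N (e + s • d) = herm N e + s • herm N d := by
    intro s
    exact ((hermL N).map_add _ _).trans (congrArg _ ((hermL N).map_smul s d))
  have h2 : HasDerivAt (fun s : ℝ => z • (1 : Matrix (Fin N) (Fin N) ℂ) - herm N (e + s • d))
      (-herm N d) 0 := by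
    simp only [hl]
    have := ((hasDerivAt_id (0:ℝ)).smul_const (herm N d)).const_add (herm N e)
    rw [one_smul] at this
    exact this.const_sub (z • (1 : Matrix (Fin N) (Fin N) ℂ))
  have h3 := HasFDerivAt.comp_hasDerivAt_of_eq (0:ℝ) h h2 (by simp [hu])
  have h4 : HasDerivAt (fun s : ℝ => G N z (herm N (e + s • d)))
      (G N z (herm N e) * herm N d * G N z (herm N e)) 0 := by
    have hG : G N z (herm N e) = ((u⁻¹ : (Matrix (Fin N) (Fin N) ℂ)ˣ) : Matrix _ _ ℂ) := by
      rw [G, Matrix.nonsing_inv_eq_ringInverse, ← hu, Ring.inverse_unit]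
    simp only [hG]
    simp only [G, Matrix.nonsing_inv_eq_ringInverse]
    refine HasDerivAt.congr_deriv h3 ?_
    simp
  have h5 := hasDerivAt_pi.1 (hasDerivAt_pi.1 h4 k) l
  exact h5

lemma trace_pow_deriv (N n : ℕ) (M H : Matrix (Fin N) (Fin N) ℂ) :
    HasDerivAt (fun s : ℝ => Matrix.trace ((M + s • H) ^ n))
      ((n : ℂ) * Matrix.trace (M ^ (n - 1) * H)) 0 := by
  have h1 : HasDerivAt (fun s : ℝ => M + s • H) H 0 := by
    have := ((hasDerivAt_id (0:ℝ)).smul_const H).const_add M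
    rw [one_smul] at this
    exact this
  have h2 := h1.fun_pow' n
  let T : Matrix (Fin N) (Fin N) ℂ →L[ℝ] ℂ :=
    (Matrix.traceLinearMap (Fin N) ℝ ℂ).toContinuousLinearMap
  have h3 := T.hasFDerivAt.comp_hasDerivAt (0:ℝ) h2
  have hT : ∀ A, T A = Matrix.trace A := fun A => rfl
  refine HasDerivAt.congr_deriv (f := fun s : ℝ => Matrix.trace ((M + s • H) ^ n)) h3 ?_
  refine (hT _).trans ?_
  rw [Matrix.trace_sum]
  simp only [zero_smul, add_zero]
  rw [Finset.sum_congr rfl (g := fun _ => Matrix.trace (M ^ (n - 1) * H))]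
  · simp
  · intro a ha
    rw [Finset.mem_range] at ha
    rw [Matrix.trace_mul_comm, ← mul_assoc, ← pow_add]
    congr 3
    simp only [Nat.pred_eq_sub_one]
    omega

lemma Vt_lower (v : ℕ) (hv : 2 ≤ v) (hve : Even v) (t : ℕ → ℝ) (ht : 0 < t v) :
    ∃ C : ℝ, ∀ x : ℝ, x ^ 2 / 2 - C ≤ Vt v t x := by
  set T : ℝ := ∑ j ∈ Finset.Icc 1 (v - 1), |t j| with hT
  set R : ℝ := max 1 (T / t v) with hR
  have hR1 : 1 ≤ R := le_max_left _ _
  refine ⟨∑ j ∈ Finset.Icc 1 v, |t j| * R ^ j, fun x => ?_⟩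
  have hC : 0 ≤ ∑ j ∈ Finset.Icc 1 v, |t j| * R ^ j :=
    Finset.sum_nonneg fun j _ => by positivity
  rw [Vt]
  suffices h : -(∑ j ∈ Finset.Icc 1 v, |t j| * R ^ j) ≤ ∑ j ∈ Finset.Icc 1 v, t j * x ^ j by
    linarith
  rcases le_total |x| R with hx | hx
  · rw [← Finset.sum_neg_distrib]
    refine Finset.sum_le_sum fun j _ => ?_
    have h1 : |t j * x ^ j| ≤ |t j| * R ^ j := by
      rw [abs_mul, abs_pow]
      gcongr
    exact (abs_le.1 h1).1
  · have hx1 : 1 ≤ |x| := hR1.trans hx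
    have hv1 : v = (v - 1) + 1 := by omega
    have hsplit : ∑ j ∈ Finset.Icc 1 v, t j * x ^ j =
        ∑ j ∈ Finset.Icc 1 (v - 1), t j * x ^ j + t v * x ^ v := by
      conv_lhs => rw [hv1]
      rw [Finset.sum_Icc_succ_top (by omega), ← hv1]
    have hlow : -(T * |x| ^ (v - 1)) ≤ ∑ j ∈ Finset.Icc 1 (v - 1), t j * x ^ j := by
      rw [hT, Finset.sum_mul, ← Finset.sum_neg_distrib]
      refine Finset.sum_le_sum fun j hj => ?_
      rw [Finset.mem_Icc] at hj
      have h1 : |t j * x ^ j| ≤ |t j| * |x| ^ (v - 1) := by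
        rw [abs_mul, abs_pow]
        gcongr
        exact hj.2
      exact (abs_le.1 h1).1
    have hxv : x ^ v = |x| ^ (v - 1) * |x| := by
      rw [← pow_succ, ← hv1, hve.pow_abs]
    have h3 : T ≤ t v * |x| := by
      have : T / t v ≤ |x| := (le_max_right _ _).trans hx
      rw [div_le_iff₀ ht] at this
      linarith
    have h4 : T * |x| ^ (v - 1) ≤ t v * |x| * |x| ^ (v - 1) := by gcongr
    rw [hsplit, hxv]
    nlinarith

lemma pow_spec (N n : ℕ) (U W D : Matrix (Fin N) (Fin N) ℂ) (h1 : U * W = 1) (h2 : W * U = 1) :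
    (U * D * W) ^ n = U * D ^ n * W := by
  induction n with
  | zero => simp [h1]
  | succ n ih =>
    rw [pow_succ, ih, pow_succ]
    calc _ = U * D ^ n * ((W * U) * D) * W := by simp only [mul_assoc]
      _ = _ := by rw [h2, one_mul]; simp only [mul_assoc]

lemma trace_facts (v N : ℕ) (t : ℕ → ℝ) (M : Matrix (Fin N) (Fin N) ℂ) (hM : M.IsHermitian) :
    ∃ x : Fin N → ℝ, Matrix.trace (VtM v N t M) = ((∑ a, Vt v t (x a) : ℝ) : ℂ) ∧
      ∀ i j, ‖M i j‖ ^ 2 ≤ ∑ a, x a ^ 2 := by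
  obtain ⟨U, W, x, h1, h2, h3, -, -⟩ := spectral N M hM
  have hp : ∀ n, Matrix.trace (M ^ n) = ∑ a, (x a : ℂ) ^ n := by
    intro n
    rw [h3, pow_spec N n U W _ h1 h2, Matrix.trace_mul_cycle, h2, one_mul, Matrix.diagonal_pow,
      Matrix.trace_diagonal]
    rfl
  refine ⟨x, ?_, ?_⟩
  · simp only [VtM, Vt, Matrix.trace_add, Matrix.trace_smul, Matrix.trace_sum, hp]
    push_cast
    rw [Finset.sum_add_distrib, Finset.sum_comm (s := Finset.univ)]
    congr 1
    · rw [Finset.smul_sum]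
      refine Finset.sum_congr rfl fun a _ => ?_
      rw [smul_eq_mul]
      ring
    · refine Finset.sum_congr rfl fun a _ => ?_
      rw [Finset.smul_sum]
      rfl
  · intro i j
    have h4 : Matrix.trace (M ^ 2) = ((∑ a, ∑ b, ‖M a b‖ ^ 2 : ℝ) : ℂ) := by
      rw [pow_two, Matrix.trace]
      push_cast
      refine Finset.sum_congr rfl fun a _ => ?_
      rw [Matrix.diag_apply, Matrix.mul_apply]
      refine Finset.sum_congr rfl fun b _ => ?_
      rw [← hM.apply b a]
      exact Complex.mul_conj' (M a b)
    have h5 : ∑ a, x a ^ 2 = ∑ a, ∑ b, ‖M a b‖ ^ 2 := by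
      rw [hp] at h4
      exact_mod_cast h4
    rw [h5]
    calc ‖M i j‖ ^ 2 ≤ ∑ b, ‖M i b‖ ^ 2 :=
          Finset.single_le_sum (f := fun b => ‖M i b‖ ^ 2) (fun _ _ => by positivity)
            (Finset.mem_univ j)
      _ ≤ _ := Finset.single_le_sum (f := fun a => ∑ b, ‖M a b‖ ^ 2)
            (fun _ _ => by positivity) (Finset.mem_univ i)

lemma norm_le_of_entries (N : ℕ) (e : coords N) (r : ℝ) (hr : 0 ≤ r)
    (h : ∀ i j, ‖herm N e i j‖ ≤ r) : ‖e‖ ≤ r := by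
  rw [Prod.norm_def]
  apply max_le
  · rw [pi_norm_le_iff_of_nonneg hr]
    intro i
    simpa [herm] using h i i
  · rw [pi_norm_le_iff_of_nonneg hr]
    rintro ⟨⟨a, b⟩, hab⟩
    have h0 := h a b
    have hab' : a < b := hab
    rw [Prod.norm_def]
    simp only [herm, hab', dif_pos] at h0
    exact max_le ((Complex.abs_re_le_norm _).trans h0) ((Complex.abs_im_le_norm _).trans h0)

lemma wt_complex (v N : ℕ) (t : ℕ → ℝ) (e : coords N) :
    (wt v N t e : ℂ) = Complex.exp (-(N : ℂ) * Matrix.trace (VtM v N t (herm N e))) := by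
  obtain ⟨x, hx, -⟩ := trace_facts v N t _ (herm_isHermitian N e)
  rw [wt, hx, Complex.ofReal_re]
  push_cast
  rfl

lemma wt_bound (v N : ℕ) (hv : 2 ≤ v) (hve : Even v) (t : ℕ → ℝ) (ht : 0 < t v) (hN : 1 ≤ N) :
    ∃ K : ℝ, 0 ≤ K ∧ ∀ e : coords N, wt v N t e ≤ K * Real.exp (-(1 + ‖e‖)) := by
  obtain ⟨C, hC⟩ := Vt_lower v hv hve t ht
  refine ⟨Real.exp (N * (N * C) + 3 / 2), by positivity, fun e => ?_⟩
  obtain ⟨x, hx, hb⟩ := trace_facts v N t _ (herm_isHermitian N e)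
  rw [wt, hx, Complex.ofReal_re, ← Real.exp_add]
  apply Real.exp_le_exp.2
  have h1 : ‖e‖ ≤ √(∑ a, x a ^ 2) :=
    norm_le_of_entries N e _ (by positivity) fun i j => Real.le_sqrt_of_sq_le (hb i j)
  have h2 : ‖e‖ ^ 2 ≤ ∑ a, x a ^ 2 := by
    rw [← Real.sq_sqrt (show 0 ≤ ∑ a, x a ^ 2 by positivity)]
    gcongr
  have h3 : (∑ a, x a ^ 2) / 2 - N * C ≤ ∑ a, Vt v t (x a) := by
    calc _ = ∑ a, (x a ^ 2 / 2 - C) := by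
          rw [Finset.sum_sub_distrib, Finset.sum_div]
          simp
      _ ≤ _ := Finset.sum_le_sum fun a _ => hC (x a)
  have hN' : (1 : ℝ) ≤ N := by exact_mod_cast hN
  have h4 : (N : ℝ) * (‖e‖ ^ 2 / 2 - N * C) ≤ N * ∑ a, Vt v t (x a) := by
    gcongr
    linarith
  nlinarith [sq_nonneg (‖e‖ - 1), sq_nonneg ‖e‖]

lemma VtM_continuous (v N : ℕ) (t : ℕ → ℝ) : Continuous (VtM v N t) := by
  unfold VtM
  fun_prop

lemma Vt'M_continuous (v N : ℕ) (t : ℕ → ℝ) : Continuous (Vt'M v N t) := by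
  unfold Vt'M
  fun_prop

lemma wt_continuous (v N : ℕ) (t : ℕ → ℝ) : Continuous (wt v N t) := by
  unfold wt
  have h := (VtM_continuous v N t).comp (herm_continuous N)
  have h2 := h.matrix_trace
  exact Real.continuous_exp.comp (continuous_const.mul (Complex.continuous_re.comp h2))

lemma haar_coords (N : ℕ) : (volume : Measure (coords N)).IsAddHaarMeasure := by
  have h0 : (volume : Measure (ℝ × ℝ)).IsAddHaarMeasure :=
    inferInstanceAs ((volume : Measure ℝ).prod (volume : Measure ℝ)).IsAddHaarMeasure
  have h1 : (volume : Measure ({p : Fin N × Fin N // p.1 < p.2} → ℝ × ℝ)).IsAddHaarMeasure :=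
    inferInstanceAs (Measure.pi fun _ : {p : Fin N × Fin N // p.1 < p.2} =>
      (volume : Measure (ℝ × ℝ))).IsAddHaarMeasure
  have h2 : (volume : Measure (Fin N → ℝ)).IsAddHaarMeasure := inferInstance
  exact Measure.prod.instIsAddHaarMeasure (volume : Measure (Fin N → ℝ))
    (volume : Measure ({p : Fin N × Fin N // p.1 < p.2} → ℝ × ℝ))

lemma integrable_wt (v N : ℕ) (hv : 2 ≤ v) (hve : Even v) (t : ℕ → ℝ) (ht : 0 < t v) (hN : 1 ≤ N)
    (f : coords N → ℂ) (hf : Continuous f) (K : ℝ) (m : ℕ)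
    (hb : ∀ e, ‖f e‖ ≤ K * (1 + ‖e‖) ^ m) :
    Integrable (fun e => f e * (wt v N t e : ℂ)) := by
  obtain ⟨L, hL0, hL⟩ := wt_bound v N hv hve t ht hN
  have := haar_coords N
  set d := Module.finrank ℝ (coords N) with hd
  have hK : 0 ≤ K := by simpa using (norm_nonneg _).trans (hb 0)
  have hI : Integrable (fun e : coords N => K * L * (m + (d + 1)).factorial *
      (1 + ‖e‖) ^ (-((d : ℝ) + 1))) :=
    (integrable_one_add_norm (by rw [hd]; linarith)).const_mul _
  refine hI.mono' ?_ (Eventually.of_forall fun e => ?_)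
  · exact (hf.mul (Complex.continuous_ofReal.comp (wt_continuous v N t))).aestronglyMeasurable
  · have hw : 0 ≤ wt v N t e := (Real.exp_pos _).le
    rw [norm_mul, Complex.norm_real, Real.norm_of_nonneg hw]
    have hr : 0 < 1 + ‖e‖ := by positivity
    have h1 := Real.pow_div_factorial_le_exp _ hr.le (m + (d + 1))
    rw [div_le_iff₀ (by positivity)] at h1
    have h2 : (1 + ‖e‖) ^ (-((d : ℝ) + 1)) = ((1 + ‖e‖) ^ (d + 1))⁻¹ := by
      rw [Real.rpow_neg hr.le, ← Nat.cast_succ, Real.rpow_natCast]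
    have h3 : (1 + ‖e‖) ^ m * Real.exp (-(1 + ‖e‖)) ≤
        (m + (d + 1)).factorial * ((1 + ‖e‖) ^ (d + 1))⁻¹ := by
      rw [Real.exp_neg, ← div_eq_mul_inv, ← div_eq_mul_inv, div_le_div_iff₀ (by positivity)
        (by positivity), ← pow_add]
      linarith
    calc _ ≤ (K * (1 + ‖e‖) ^ m) * (L * Real.exp (-(1 + ‖e‖))) := by
          gcongr
          · exact hb e
          · exact hL e
      _ = K * L * ((1 + ‖e‖) ^ m * Real.exp (-(1 + ‖e‖))) := by ring
      _ ≤ K * L * ((m + (d + 1)).factorial * ((1 + ‖e‖) ^ (d + 1))⁻¹) := by gcongr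
      _ = _ := by rw [h2]; ring

lemma Vt'M_bound (v N : ℕ) (t : ℕ → ℝ) (hv : 2 ≤ v) (hN : 1 ≤ N) : ∃ K : ℝ, 0 ≤ K ∧
    ∀ (e : coords N) i j, ‖Vt'M v N t (herm N e) i j‖ ≤ K * (1 + ‖e‖) ^ v := by
  obtain ⟨C, hC0, hC⟩ := herm_norm_le N
  have : Nonempty (Fin N) := ⟨⟨0, hN⟩⟩
  have hpow : ∀ (e : coords N) (n : ℕ), n ≤ v →
      ‖herm N e ^ n‖ ≤ (1 + C) ^ v * (1 + ‖e‖) ^ v := by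
    intro e n hn
    calc ‖herm N e ^ n‖ ≤ ‖herm N e‖ ^ n := norm_pow_le _ _
      _ ≤ ((1 + C) * (1 + ‖e‖)) ^ n := by
          gcongr
          nlinarith [hC e, norm_nonneg e]
      _ ≤ ((1 + C) * (1 + ‖e‖)) ^ v := by
          gcongr
          nlinarith [norm_nonneg e]
      _ = _ := mul_pow _ _ _
  refine ⟨(1 + C) ^ v + ∑ j ∈ Finset.Icc 1 v, ‖(j : ℂ) * (t j : ℂ)‖ * (1 + C) ^ v,
    by positivity, fun e i j => ?_⟩
  refine (entry_le N _ i j).trans ?_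
  rw [Vt'M, add_mul, Finset.sum_mul]
  refine (norm_add_le _ _).trans (add_le_add ?_ ?_)
  · simpa using hpow e 1 (by omega)
  · refine norm_sum_le_of_le _ fun a ha => ?_
    rw [Finset.mem_Icc] at ha
    rw [norm_smul, mul_assoc]
    gcongr
    exact hpow e _ (by omega)

lemma wt_deriv (v N : ℕ) (t : ℕ → ℝ) (e d : coords N) :
    HasLineDerivAt ℝ (fun e => (wt v N t e : ℂ))
      (-(N : ℂ) * Matrix.trace (Vt'M v N t (herm N e) * herm N d) * (wt v N t e : ℂ)) e d := by
  have hl : ∀ s : ℝ, herm N (e + s • d) = herm N e + s • herm N d := by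
    intro s
    exact ((hermL N).map_add _ _).trans (congrArg _ ((hermL N).map_smul s d))
  have hT : HasDerivAt (fun s : ℝ => Matrix.trace (VtM v N t (herm N (e + s • d))))
      (Matrix.trace (Vt'M v N t (herm N e) * herm N d)) 0 := by
    simp only [hl, VtM, Vt'M, Matrix.trace_add, Matrix.trace_smul, Matrix.trace_sum, add_mul,
      Finset.sum_mul, Matrix.smul_mul, smul_eq_mul]
    refine HasDerivAt.add ?_ (HasDerivAt.fun_sum fun a _ => ?_)
    · refine ((trace_pow_deriv N 2 (herm N e) (herm N d)).const_mul (2⁻¹ : ℂ)).congr_deriv ?_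
      simp
    · refine ((trace_pow_deriv N a (herm N e) (herm N d)).const_mul (t a : ℂ)).congr_deriv ?_
      ring
  have h := (hT.const_mul (-(N : ℂ))).cexp
  simp only [wt_complex]
  refine HasDerivAt.congr_deriv h ?_
  simp only [zero_smul, add_zero]
  ring

lemma G_entry_continuous (N : ℕ) (z : ℂ) (hz : z.im ≠ 0) (a b : Fin N) :
    Continuous fun e => G N z (herm N e) a b :=
  (G_continuous N z hz).matrix_elem a b

lemma intA (v N : ℕ) (hv : 2 ≤ v) (hve : Even v) (t : ℕ → ℝ) (ht : 0 < t v) (hN : 1 ≤ N)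
    (z : ℂ) (hz : z.im ≠ 0) (a b c d : Fin N) :
    Integrable (fun e => G N z (herm N e) a b * G N z (herm N e) c d * (wt v N t e : ℂ)) := by
  refine integrable_wt v N hv hve t ht hN _
    ((G_entry_continuous N z hz a b).mul (G_entry_continuous N z hz c d))
    (N * |z.im|⁻¹ * (N * |z.im|⁻¹)) 0 fun e => ?_
  have h := (G_facts N z hz _ (herm_isHermitian N e)).2
  rw [norm_mul, pow_zero, mul_one]
  exact mul_le_mul (h a b) (h c d) (norm_nonneg _) (by positivity)

lemma intB (v N : ℕ) (hv : 2 ≤ v) (hve : Even v) (t : ℕ → ℝ) (ht : 0 < t v) (hN : 1 ≤ N)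
    (z : ℂ) (hz : z.im ≠ 0) (a b c d : Fin N) :
    Integrable (fun e => G N z (herm N e) a b * Vt'M v N t (herm N e) c d * (wt v N t e : ℂ)) := by
  obtain ⟨K, hK0, hK⟩ := Vt'M_bound v N t hv hN
  refine integrable_wt v N hv hve t ht hN _
    ((G_entry_continuous N z hz a b).mul
      (((Vt'M_continuous v N t).comp (herm_continuous N)).matrix_elem c d))
    (N * |z.im|⁻¹ * K) v fun e => ?_
  have h := (G_facts N z hz _ (herm_isHermitian N e)).2
  rw [norm_mul, mul_assoc]
  exact mul_le_mul (h a b) (hK e c d) (norm_nonneg _) (by positivity)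

lemma intC (v N : ℕ) (hv : 2 ≤ v) (hve : Even v) (t : ℕ → ℝ) (ht : 0 < t v) (hN : 1 ≤ N)
    (z : ℂ) (hz : z.im ≠ 0) (a b : Fin N) :
    Integrable (fun e => G N z (herm N e) a b * (wt v N t e : ℂ)) := by
  refine integrable_wt v N hv hve t ht hN _ (G_entry_continuous N z hz a b)
    (N * |z.im|⁻¹) 0 fun e => ?_
  have h := (G_facts N z hz _ (herm_isHermitian N e)).2
  rw [pow_zero, mul_one]
  exact h a b

/-- Integration by parts in the direction of a Hermitian matrix `H`, expanded in entries. -/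
lemma key_sum (v N : ℕ) (hv : 2 ≤ v) (hve : Even v) (t : ℕ → ℝ) (ht : 0 < t v) (hN : 1 ≤ N)
    (z : ℂ) (hz : z.im ≠ 0) (k l : Fin N) (H : Matrix (Fin N) (Fin N) ℂ) (hH : H.IsHermitian) :
    ∑ a, ∑ b, H a b *
      ((∫ e : coords N, G N z (herm N e) k a * G N z (herm N e) b l * (wt v N t e : ℂ)) -
      N * ∫ e : coords N,
        G N z (herm N e) k l * Vt'M v N t (herm N e) b a * (wt v N t e : ℂ)) = 0 := by
  have := haar_coords N
  obtain ⟨d, hd⟩ := herm_surj N H hH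
  have hA := intA v N hv hve t ht hN z hz
  have hB := intB v N hv hve t ht hN z hz
  have e1 : ∀ e : coords N, (G N z (herm N e) * herm N d * G N z (herm N e)) k l *
      (wt v N t e : ℂ) = ∑ a, ∑ b, H a b *
        (G N z (herm N e) k a * G N z (herm N e) b l * (wt v N t e : ℂ)) := by
    intro e
    rw [hd, Matrix.mul_apply, Finset.sum_mul, Finset.sum_comm]
    refine Finset.sum_congr rfl fun b _ => ?_
    rw [Matrix.mul_apply, Finset.sum_mul, Finset.sum_mul]
    refine Finset.sum_congr rfl fun a _ => ?_
    ring
  have e2 : ∀ e : coords N, G N z (herm N e) k l *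
      (-(N : ℂ) * Matrix.trace (Vt'M v N t (herm N e) * herm N d) * (wt v N t e : ℂ)) =
      ∑ a, ∑ b, (-(N : ℂ) * H a b) *
        (G N z (herm N e) k l * Vt'M v N t (herm N e) b a * (wt v N t e : ℂ)) := by
    intro e
    rw [hd, Matrix.trace, Finset.mul_sum, Finset.sum_mul, Finset.mul_sum, Finset.sum_comm]
    refine Finset.sum_congr rfl fun b _ => ?_
    rw [Matrix.diag_apply, Matrix.mul_apply, Finset.mul_sum, Finset.sum_mul, Finset.mul_sum]
    refine Finset.sum_congr rfl fun a _ => ?_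
    ring
  have ibp := integral_bilinear_hasLineDerivAt_right_eq_neg_left_of_integrable
    (μ := (volume : Measure (coords N))) (B := ContinuousLinearMap.mul ℝ ℂ)
    (f := fun e => G N z (herm N e) k l)
    (f' := fun e => (G N z (herm N e) * herm N d * G N z (herm N e)) k l)
    (g := fun e => (wt v N t e : ℂ))
    (g' := fun e => -(N : ℂ) * Matrix.trace (Vt'M v N t (herm N e) * herm N d) * (wt v N t e : ℂ))
    (v := d)
    (by
      simp only [ContinuousLinearMap.mul_apply', e1]
      exact integrable_finsetSum _ fun a _ => integrable_finsetSum _ fun b _ =>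
        (hA k a b l).const_mul _)
    (by
      simp only [ContinuousLinearMap.mul_apply', e2]
      exact integrable_finsetSum _ fun a _ => integrable_finsetSum _ fun b _ =>
        (hB k l b a).const_mul _)
    (by
      simp only [ContinuousLinearMap.mul_apply']
      exact intC v N hv hve t ht hN z hz k l)
    (fun e _ => G_deriv N z hz e d k l)
    (fun e _ => wt_deriv v N t e d)
  simp only [ContinuousLinearMap.mul_apply', e1, e2] at ibp
  have s1 : ∫ e : coords N, ∑ a, ∑ b, (-(N : ℂ) * H a b) *
        (G N z (herm N e) k l * Vt'M v N t (herm N e) b a * (wt v N t e : ℂ)) =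
      ∑ a, ∑ b, (-(N : ℂ) * H a b) * ∫ e : coords N,
        (G N z (herm N e) k l * Vt'M v N t (herm N e) b a * (wt v N t e : ℂ)) := by
    refine (integral_finsetSum _ fun a _ => integrable_finsetSum _ fun b _ =>
      (hB k l b a).const_mul _).trans ?_
    refine Finset.sum_congr rfl fun a _ => ?_
    refine (integral_finsetSum _ fun b _ => (hB k l b a).const_mul _).trans ?_
    exact Finset.sum_congr rfl fun b _ => integral_const_mul _ _
  have s2 : ∫ e : coords N, ∑ a, ∑ b, H a b *
        (G N z (herm N e) k a * G N z (herm N e) b l * (wt v N t e : ℂ)) =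
      ∑ a, ∑ b, H a b * ∫ e : coords N,
        (G N z (herm N e) k a * G N z (herm N e) b l * (wt v N t e : ℂ)) := by
    refine (integral_finsetSum _ fun a _ => integrable_finsetSum _ fun b _ =>
      (hA k a b l).const_mul _).trans ?_
    refine Finset.sum_congr rfl fun a _ => ?_
    refine (integral_finsetSum _ fun b _ => (hA k a b l).const_mul _).trans ?_
    exact Finset.sum_congr rfl fun b _ => integral_const_mul _ _
  rw [s1, s2] at ibp
  rw [eq_neg_iff_add_eq_zero, ← Finset.sum_add_distrib] at ibp
  rw [← ibp]
  refine Finset.sum_congr rfl fun a _ => ?_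
  rw [← Finset.sum_add_distrib]
  refine Finset.sum_congr rfl fun b _ => ?_
  ring

/-- For every `N ≥ 1`, every `z ∈ ℂ` with `Im z ≠ 0`, and all indices
`i j k l`, one has `E(G_{ki} G_{jl}) = N ⬝ E(G_{kl} (V_t'(M))_{ji})`. -/
theorem expectation_resolvent_identity (v N : ℕ) (hv : 2 ≤ v) (hve : Even v)
    (t : ℕ → ℝ) (ht : 0 < t v) (hN : 1 ≤ N) (z : ℂ) (hz : z.im ≠ 0)
    (i j k l : Fin N) :
    Em v N t (fun e => G N z (herm N e) k i * G N z (herm N e) j l) =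
      (N : ℂ) * Em v N t (fun e => G N z (herm N e) k l * Vt'M v N t (herm N e) j i) := by
  set c : Fin N → Fin N → ℂ := fun a b =>
    (∫ e : coords N, G N z (herm N e) k a * G N z (herm N e) b l * (wt v N t e : ℂ)) -
    N * ∫ e : coords N, G N z (herm N e) k l * Vt'M v N t (herm N e) b a * (wt v N t e : ℂ) with hc
  have key : ∀ H : Matrix (Fin N) (Fin N) ℂ, H.IsHermitian → ∑ a, ∑ b, H a b * c a b = 0 :=
    fun H hH => key_sum v N hv hve t ht hN z hz k l H hH
  have hcij : c i j = 0 := by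
    have k1 := key (Matrix.single i j 1 + Matrix.single j i 1) (by
      rw [Matrix.IsHermitian, Matrix.conjTranspose_add, Matrix.conjTranspose_single,
        Matrix.conjTranspose_single, star_one, add_comm])
    have k2 := key (Matrix.single i j Complex.I + Matrix.single j i (-Complex.I)) (by
      rw [Matrix.IsHermitian, Matrix.conjTranspose_add, Matrix.conjTranspose_single,
        Matrix.conjTranspose_single, add_comm]
      simp)
    have hs : ∀ (p q : Fin N) (w : ℂ), ∑ a, ∑ b, Matrix.single p q w a b * c a b = w * c p q := by
      intro p q w
      rw [Finset.sum_eq_single p, Finset.sum_eq_single q]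
      · simp
      · intro b _ hb
        simp [Matrix.single_apply, hb.symm]
      · simp
      · intro a _ ha
        refine Finset.sum_eq_zero fun b _ => ?_
        simp [Matrix.single_apply, ha.symm]
      · simp
    simp only [Matrix.add_apply, add_mul, Finset.sum_add_distrib, hs] at k1 k2
    linear_combination (1 / 2 : ℂ) * k1 - Complex.I / 2 * k2 +
      (c i j - c j i) / 2 * Complex.I_sq
  have h := sub_eq_zero.1 hcij
  rw [Em, Em, h, mul_div_assoc]

end LoopEq
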